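/- Fix 1 ≤ p ≤ ∞, a natural number n ≥ 1 and a constant L_min > 0. Persistent entropy is continuous with respect to d_p on the set of finite persistence barcodes with at most n intervals and total length at least L_min: for every such barcode A and every ε > 0 there exists δ > 0 such that every barcode B in this set with d_p(A, B) ≤ δ satisfies |E(A) − E(B)| ≤ ε. -/

import Mathlib

open Finset

/-- A finite persistence barcode with `n` intervals is given by endpoint functions
`x y : Fin n → ℝ` with `x i ≤ y i` (zero-length intervals serve as padding).
`pcost` is the cost of matching interval `i` of `(xa, ya)` with interval `γ i` of `(xb, yb)`. -/
noncomputable def pcost {n : ℕ} (xa ya xb yb : Fin n → ℝ) (γ : Equiv.Perm (Fin n)) (i : Fin n) : ℝ :=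
  max |xa i - xb (γ i)| |ya i - yb (γ i)|

/-- `p`-th Wasserstein distance between barcodes with `n` intervals each:
`d_p(A,B) = min_γ (Σ_i max{|x_i^a − x_{γ(i)}^b|, |y_i^a − y_{γ(i)}^b|}^p)^(1/p)`. -/
noncomputable def dW {n : ℕ} (p : ℝ) (xa ya xb yb : Fin n → ℝ) : ℝ :=
  (Finset.univ : Finset (Equiv.Perm (Fin n))).inf' Finset.univ_nonempty
    (fun γ => (∑ i, (pcost xa ya xb yb γ i) ^ p) ^ (1 / p))

/-- Bottleneck distance `d_∞(A,B) = min_γ max_i max{|x_i^a − x_{γ(i)}^b|, |y_i^a − y_{γ(i)}^b|}`. -/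
noncomputable def dInf {n : ℕ} (xa ya xb yb : Fin n → ℝ) : ℝ :=
  (Finset.univ : Finset (Equiv.Perm (Fin n))).inf' Finset.univ_nonempty
    (fun γ => ⨆ i, pcost xa ya xb yb γ i)

/-- Total length `L_a = Σ_i (y_i − x_i)` of a barcode. -/
noncomputable def lenSum {n : ℕ} (x y : Fin n → ℝ) : ℝ := ∑ i, (y i - x i)

/-- Persistent entropy `E(A) = −Σ_i (ℓ_i/L) log(ℓ_i/L)` (note `Real.log 0 = 0`,
which realizes the convention `0·log 0 = 0`). -/
noncomputable def pentropy {n : ℕ} (x y : Fin n → ℝ) : ℝ :=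
  -∑ i, ((y i - x i) / lenSum x y) * Real.log ((y i - x i) / lenSum x y)

/-!
Pad both barcodes to `n` intervals and regard each as a point of `ℝⁿ × ℝⁿ` with the sup metric.
Entropy is continuous there wherever the total length is nonzero, since `t ↦ -t log t` is
continuous on all of `ℝ`, and it does not see the order of the intervals. The bottleneck distance
is the smallest sup distance from `A` to a reordering of `B`, so entropy is continuous for it too.
Every `d_p` dominates the bottleneck distance, so one `δ` serves all exponents.
-/

theorem iSup_le_rpow_sum_rpow {ι : Type*} [Fintype ι] {f : ι → ℝ} (hf : ∀ i, 0 ≤ f i)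
    {p : ℝ} (hp : 0 < p) : ⨆ i, f i ≤ (∑ i, f i ^ p) ^ (1 / p) := by
  have hterm (i : ι) : 0 ≤ f i ^ p := Real.rpow_nonneg (hf i) p
  have hsum : 0 ≤ ∑ i, f i ^ p := sum_nonneg fun i _ => hterm i
  refine Real.iSup_le (fun i => ?_) (Real.rpow_nonneg hsum _)
  rw [one_div, Real.le_rpow_inv_iff_of_pos (hf i) hsum hp]
  exact single_le_sum (fun j _ => hterm j) (mem_univ i)

section Barcode

variable {n : ℕ}

theorem pcost_nonneg (xa ya xb yb : Fin n → ℝ) (γ : Equiv.Perm (Fin n)) (i : Fin n) :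
    0 ≤ pcost xa ya xb yb γ i :=
  (abs_nonneg _).trans (le_max_left _ _)

theorem dInf_le_dW (xa ya xb yb : Fin n → ℝ) {p : ℝ} (hp : 0 < p) :
    dInf xa ya xb yb ≤ dW p xa ya xb yb :=
  inf'_mono_fun fun γ _ => iSup_le_rpow_sum_rpow (pcost_nonneg xa ya xb yb γ) hp

theorem dist_comp_perm_eq_iSup_pcost (xa ya xb yb : Fin n → ℝ) (γ : Equiv.Perm (Fin n)) :
    dist (xa, ya) (xb ∘ γ, yb ∘ γ) = ⨆ i, pcost xa ya xb yb γ i := by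
  have hnonneg : 0 ≤ ⨆ i, pcost xa ya xb yb γ i := Real.iSup_nonneg (pcost_nonneg xa ya xb yb γ)
  have hle (i : Fin n) : pcost xa ya xb yb γ i ≤ ⨆ j, pcost xa ya xb yb γ j :=
    le_ciSup (Set.finite_range _).bddAbove i
  apply le_antisymm
  · exact max_le
      ((dist_pi_le_iff hnonneg).2 fun i => (le_max_left _ _).trans (hle i))
      ((dist_pi_le_iff hnonneg).2 fun i => (le_max_right _ _).trans (hle i))
  · exact Real.iSup_le (fun i => max_le_max
      (dist_le_pi_dist xa (xb ∘ γ) i) (dist_le_pi_dist ya (yb ∘ γ) i)) dist_nonneg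

theorem exists_perm_dist_eq_dInf (xa ya xb yb : Fin n → ℝ) :
    ∃ γ : Equiv.Perm (Fin n), dist (xa, ya) (xb ∘ γ, yb ∘ γ) = dInf xa ya xb yb := by
  obtain ⟨γ, -, hγ⟩ := exists_mem_eq_inf' (univ_nonempty (α := Equiv.Perm (Fin n)))
    fun γ => ⨆ i, pcost xa ya xb yb γ i
  exact ⟨γ, (dist_comp_perm_eq_iSup_pcost xa ya xb yb γ).trans hγ.symm⟩

theorem lenSum_comp_perm (x y : Fin n → ℝ) (γ : Equiv.Perm (Fin n)) :
    lenSum (x ∘ γ) (y ∘ γ) = lenSum x y :=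
  Equiv.sum_comp γ fun i => y i - x i

theorem pentropy_eq_sum_negMulLog (x y : Fin n → ℝ) :
    pentropy x y = ∑ i, Real.negMulLog ((y i - x i) / lenSum x y) := by
  simp only [pentropy, Real.negMulLog, neg_mul, sum_neg_distrib]

theorem pentropy_comp_perm (x y : Fin n → ℝ) (γ : Equiv.Perm (Fin n)) :
    pentropy (x ∘ γ) (y ∘ γ) = pentropy x y := by
  rw [pentropy_eq_sum_negMulLog, pentropy_eq_sum_negMulLog, lenSum_comp_perm]
  exact Equiv.sum_comp γ fun i => Real.negMulLog ((y i - x i) / lenSum x y)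

theorem continuous_lenSum : Continuous fun z : (Fin n → ℝ) × (Fin n → ℝ) => lenSum z.1 z.2 := by
  unfold lenSum
  fun_prop

theorem continuousAt_pentropy {x y : Fin n → ℝ} (hL : lenSum x y ≠ 0) :
    ContinuousAt (fun z : (Fin n → ℝ) × (Fin n → ℝ) => pentropy z.1 z.2) (x, y) := by
  simp only [pentropy_eq_sum_negMulLog]
  refine tendsto_finsetSum _ fun i _ => Real.continuous_negMulLog.continuousAt.comp ?_
  exact ContinuousAt.div (by fun_prop) continuous_lenSum.continuousAt hL

theorem pentropy_continuous_general (xa ya : Fin n → ℝ) :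
    (∀ i, xa i ≤ ya i) → 0 < lenSum xa ya →
      ∀ ε : ℝ, 0 < ε → ∃ δ : ℝ, 0 < δ ∧
        ∀ xb yb : Fin n → ℝ, (∀ i, xb i ≤ yb i) → 0 < lenSum xb yb →
          (dInf xa ya xb yb ≤ δ ∨ ∃ p : ℝ, 0 < p ∧ dW p xa ya xb yb ≤ δ) →
            |pentropy xa ya - pentropy xb yb| ≤ ε := by
  intro _ hLa ε hε
  obtain ⟨δ, hδ, hclose⟩ :=
    Metric.nhds_basis_closedBall.eventually_iff.1
      ((continuousAt_pentropy hLa.ne').eventually (Metric.closedBall_mem_nhds _ hε))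
  refine ⟨δ, hδ, fun xb yb _ _ hd => ?_⟩
  have hInf : dInf xa ya xb yb ≤ δ := by
    rcases hd with hInf | ⟨p, hp, hW⟩
    · exact hInf
    · exact (dInf_le_dW xa ya xb yb hp).trans hW
  obtain ⟨γ, hγ⟩ := exists_perm_dist_eq_dInf xa ya xb yb
  have hmem : (xb ∘ γ, yb ∘ γ) ∈ Metric.closedBall (xa, ya) δ :=
    Metric.mem_closedBall'.2 (hγ.trans_le hInf)
  rw [← pentropy_comp_perm xb yb γ, ← Real.dist_eq]
  exact Metric.mem_closedBall'.1 (hclose hmem)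

end Barcode

/-- persistent entropy is continuous with respect to `d_p` (`1 ≤ p ≤ ∞`) on the
set of barcodes with at most `n` intervals (modelled as `n` intervals, allowing zero-length
padding) and total length at least `L_min > 0`. -/
theorem pentropy_continuous {n : ℕ} (hn : 1 ≤ n) (Lmin : ℝ) (hLmin : 0 < Lmin) :
    (∀ p : ℝ, 1 ≤ p →
      ∀ xa ya : Fin n → ℝ, (∀ i, xa i ≤ ya i) → Lmin ≤ lenSum xa ya →
        ∀ ε : ℝ, 0 < ε → ∃ δ : ℝ, 0 < δ ∧
          ∀ xb yb : Fin n → ℝ, (∀ i, xb i ≤ yb i) → Lmin ≤ lenSum xb yb →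
            dW p xa ya xb yb ≤ δ → |pentropy xa ya - pentropy xb yb| ≤ ε) ∧
    (∀ xa ya : Fin n → ℝ, (∀ i, xa i ≤ ya i) → Lmin ≤ lenSum xa ya →
      ∀ ε : ℝ, 0 < ε → ∃ δ : ℝ, 0 < δ ∧
        ∀ xb yb : Fin n → ℝ, (∀ i, xb i ≤ yb i) → Lmin ≤ lenSum xb yb →
          dInf xa ya xb yb ≤ δ → |pentropy xa ya - pentropy xb yb| ≤ ε) := by
  refine ⟨fun p hp xa ya ha hLa ε hε => ?_, fun xa ya ha hLa ε hε => ?_⟩ <;>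
    obtain ⟨δ, hδ, h⟩ := pentropy_continuous_general xa ya ha (hLmin.trans_le hLa) ε hε
  · exact ⟨δ, hδ, fun xb yb hb hLb hd =>
      h xb yb hb (hLmin.trans_le hLb) (.inr ⟨p, zero_lt_one.trans_le hp, hd⟩)⟩
  · exact ⟨δ, hδ, fun xb yb hb hLb hd => h xb yb hb (hLmin.trans_le hLb) (.inl hd)⟩
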